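/- Assume m_α := min_{k∈{1,…,K}} α_k satisfies 0 < m_α ≤ 1, and assume there exists a Slater point q̄ ∈ ℝ^{S×A} with q̄ ≥ 0, B q̄ = μ and C q̄ = 0. Let η > 0 and let r̄ ∈ ℝ^{S×A}, C̄ ∈ ℝ^{K×(S×A)} and a transition kernel P̄ (with P̄(s|s′,a) ≥ 0 and Σ_{s∈S} P̄(s|s′,a) = 1) be estimates satisfying entrywise |r̄ − r̂| ≤ η, |C̄ − C| ≤ η and |P̄(s|s′,a) − P(s|s′,a)| ≤ η; let B̄ have entries B̄(s,(s′,a)) = δ_{s,s′} − γ·P̄(s|s′,a). Define the empirical LP value V̄ = max{ r̄ᵀq : C̄ q ≤ α + η·1 entrywise, ‖B̄ q − μ‖_∞ ≤ η, q ≥ 0 }, and set D = 1 + (1/m_α)·(1 + |S|/(1−γ)). Then both maxima V and V̄ are attained, and V ≤ V̄ + η and V̄ ≤ V + 2·η·D + η²·D·|S|/(1−γ). -/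

import Mathlib

open Matrix

namespace CMDPaux

lemma dot_diff {X : Type*} [Fintype X] (v w q : X → ℝ) (c : ℝ)
    (h : ∀ x, |v x - w x| ≤ c) (hq : ∀ x, 0 ≤ q x) :
    |v ⬝ᵥ q - w ⬝ᵥ q| ≤ c * ∑ x, q x := by
  rw [← sub_dotProduct, Finset.mul_sum]
  refine (Finset.abs_sum_le_sum_abs _ _).trans (Finset.sum_le_sum fun x _ => ?_)
  rw [abs_mul, abs_of_nonneg (hq x)]
  exact mul_le_mul_of_nonneg_right (h x) (hq x)

lemma dot_nonneg {X : Type*} [Fintype X] (v q : X → ℝ)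
    (h : ∀ x, v x ∈ Set.Icc (0:ℝ) 1) (hq : ∀ x, 0 ≤ q x) : 0 ≤ v ⬝ᵥ q :=
  Finset.sum_nonneg fun x _ => mul_nonneg (h x).1 (hq x)

lemma dot_le {X : Type*} [Fintype X] (v q : X → ℝ)
    (h : ∀ x, v x ∈ Set.Icc (0:ℝ) 1) (hq : ∀ x, 0 ≤ q x) : v ⬝ᵥ q ≤ ∑ x, q x :=
  Finset.sum_le_sum fun x _ => mul_le_of_le_one_left (hq x) (h x).2

lemma flow_sum {S A : Type*} [Fintype S] [DecidableEq S] [Fintype A] (γ : ℝ)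
    (P : S → S → A → ℝ) (hPsum : ∀ s' a, ∑ s, P s s' a = 1)
    (B : Matrix S (S × A) ℝ)
    (hB : ∀ s s' a, B s (s', a) = (if s = s' then (1:ℝ) else 0) - γ * P s s' a)
    (q : S × A → ℝ) : ∑ s, B.mulVec q s = (1 - γ) * ∑ x, q x := by
  simp only [mulVec, dotProduct]
  rw [Finset.sum_comm, Finset.mul_sum]
  refine Finset.sum_congr rfl fun x _ => ?_
  rw [← Finset.sum_mul]
  congr 1
  obtain ⟨s', a⟩ := x
  simp only [hB, Finset.sum_sub_distrib, ← Finset.mul_sum, hPsum]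
  simp

lemma exists_max {X : Type*} [Fintype X] (F : Set (X → ℝ)) (hF : IsClosed F) (N : ℝ)
    (hnn : ∀ q ∈ F, ∀ x, 0 ≤ q x) (hN : ∀ q ∈ F, ∑ x, q x ≤ N) (hne : F.Nonempty)
    (r : X → ℝ) : ∃ q ∈ F, ∀ q' ∈ F, r ⬝ᵥ q' ≤ r ⬝ᵥ q := by
  have hc : IsCompact F := by
    refine (isCompact_Icc (a := (0 : X → ℝ)) (b := fun _ => N)).of_isClosed_subset hF ?_
    intro q hq
    refine ⟨fun x => hnn q hq x, fun x => le_trans ?_ (hN q hq)⟩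
    exact Finset.single_le_sum (f := q) (fun y _ => hnn q hq y) (Finset.mem_univ x)
  obtain ⟨q, hq, h⟩ := hc.exists_isMaxOn (f := fun q => r ⬝ᵥ q) hne
    (by unfold dotProduct; fun_prop)
  exact ⟨q, hq, fun q' hq' => h hq'⟩

lemma inv_pos {S : Type*} [Fintype S] (γ : ℝ) (hγ : γ ∈ Set.Ioo (0:ℝ) 1)
    (Q : Matrix S S ℝ) (hQ : ∀ s s', 0 ≤ Q s s') (hQs : ∀ s', ∑ s, Q s s' = 1)
    (x : S → ℝ) (h : ∀ s, 0 ≤ x s - γ * Q.mulVec x s) (s : S) : 0 ≤ x s := by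
  have h1 : ∀ s, max (-x s) 0 ≤ γ * ∑ s', Q s s' * max (-x s') 0 := by
    intro s
    have hn : 0 ≤ ∑ s', Q s s' * max (-x s') 0 :=
      Finset.sum_nonneg fun s' _ => mul_nonneg (hQ _ _) (le_max_right _ _)
    have hm : -Q.mulVec x s ≤ ∑ s', Q s s' * max (-x s') 0 := by
      simp only [mulVec, dotProduct]
      rw [← Finset.sum_neg_distrib]
      refine Finset.sum_le_sum fun s' _ => ?_
      rw [← mul_neg]
      exact mul_le_mul_of_nonneg_left (le_max_left _ _) (hQ _ _)
    refine max_le ?_ (mul_nonneg hγ.1.le hn)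
    have := mul_le_mul_of_nonneg_left hm hγ.1.le
    have := h s
    linarith
  have h2 : ∑ s, max (-x s) 0 ≤ γ * ∑ s, max (-x s) 0 := by
    refine (Finset.sum_le_sum fun s _ => h1 s).trans (le_of_eq ?_)
    rw [← Finset.mul_sum, Finset.sum_comm]
    simp only [← Finset.sum_mul, hQs, one_mul]
  have h3 : max (-x s) 0 ≤ ∑ s, max (-x s) 0 :=
    Finset.single_le_sum (f := fun s => max (-x s) 0) (fun y _ => le_max_right _ _)
      (Finset.mem_univ s)
  have h4 : ∑ s, max (-x s) 0 ≤ 0 := by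
    have := hγ.2
    by_contra! hc
    nlinarith
  have := le_max_left (-x s) 0
  linarith

lemma solve {S : Type*} [Fintype S] (γ : ℝ) (hγ : γ ∈ Set.Ioo (0:ℝ) 1)
    (Q : Matrix S S ℝ) (hQ : ∀ s s', 0 ≤ Q s s') (hQs : ∀ s', ∑ s, Q s s' = 1)
    (b : S → ℝ) : ∃ x : S → ℝ, ∀ s, x s - γ * Q.mulVec x s = b s := by
  let L : (S → ℝ) →ₗ[ℝ] (S → ℝ) := LinearMap.id - γ • Q.mulVecLin
  have hL : ∀ x s, L x s = x s - γ * Q.mulVec x s := fun x s => by simp [L]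
  have hinj : Function.Injective L := by
    rw [← LinearMap.ker_eq_bot, LinearMap.ker_eq_bot']
    intro x hx
    have hz : ∀ s, x s - γ * Q.mulVec x s = 0 := fun s => by rw [← hL, hx]; rfl
    ext s
    refine le_antisymm ?_ (inv_pos γ hγ Q hQ hQs x (fun s => (hz s).ge) s)
    have := inv_pos γ hγ Q hQ hQs (-x) (fun s => by
      have := hz s
      simp only [mulVec_neg, Pi.neg_apply]; linarith) s
    simp only [Pi.neg_apply] at this
    simpa using this
  obtain ⟨x, hx⟩ := (LinearMap.injective_iff_surjective.1 hinj) b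
  exact ⟨x, fun s => by rw [← hL, hx]⟩

lemma repair {S A : Type*} [Fintype S] [DecidableEq S] [Fintype A] [Nonempty A] (γ : ℝ)
    (hγ : γ ∈ Set.Ioo (0:ℝ) 1)
    (P : S → S → A → ℝ) (hPnn : ∀ s s' a, 0 ≤ P s s' a) (hPsum : ∀ s' a, ∑ s, P s s' a = 1)
    (B : Matrix S (S × A) ℝ)
    (hB : ∀ s s' a, B s (s', a) = (if s = s' then (1:ℝ) else 0) - γ * P s s' a)
    (μ : S → ℝ) (hμ : ∀ s, 0 ≤ μ s)
    (q : S × A → ℝ) (hq : ∀ x, 0 ≤ q x) (e₁ e₂ : S → ℝ) (he₁ : ∀ s, 0 ≤ e₁ s)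
    (he₂ : ∀ s, 0 ≤ e₂ s) (hBq : ∀ s, B.mulVec q s = μ s + e₁ s - e₂ s) :
    ∃ d₁ d₂ : S × A → ℝ, (∀ x, 0 ≤ d₁ x) ∧ (∀ x, 0 ≤ d₂ x) ∧ (∀ x, 0 ≤ (q - d₁ + d₂) x) ∧
      B.mulVec (q - d₁ + d₂) = μ ∧ B.mulVec d₁ = e₁ ∧ B.mulVec d₂ = e₂ := by
  classical
  let X : S → ℝ := fun s => ∑ a, q (s, a)
  let p : S → A → ℝ := fun s a => if X s = 0 then 1 / (Fintype.card A : ℝ) else q (s, a) / X s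
  have hX : ∀ s, 0 ≤ X s := fun s => Finset.sum_nonneg fun a _ => hq _
  have hp : ∀ s a, 0 ≤ p s a := by
    intro s a
    simp only [p]
    split_ifs
    · positivity
    · exact div_nonneg (hq _) (hX s)
  have hps : ∀ s, ∑ a, p s a = 1 := by
    intro s
    by_cases h : X s = 0
    · simp [p, h]
    · simp only [p, h, if_false]
      rw [← Finset.sum_div]
      exact div_self h
  have hqp : ∀ s a, q (s, a) = X s * p s a := by
    intro s a
    by_cases h : X s = 0
    · rw [h, zero_mul]
      exact (Finset.sum_eq_zero_iff_of_nonneg (fun a _ => hq (s, a))).1 h a (Finset.mem_univ a)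
    · simp only [p, h, if_false]
      field_simp
  let Q : Matrix S S ℝ := fun s s' => ∑ a, P s s' a * p s' a
  have hQ : ∀ s s', 0 ≤ Q s s' := fun s s' =>
    Finset.sum_nonneg fun a _ => mul_nonneg (hPnn _ _ _) (hp _ _)
  have hQs : ∀ s', ∑ s, Q s s' = 1 := by
    intro s'
    simp only [Q]
    rw [Finset.sum_comm]
    simp only [← Finset.sum_mul, hPsum, one_mul, hps]
  have hBx : ∀ (x : S → ℝ) s, B.mulVec (fun y => x y.1 * p y.1 y.2) s
      = x s - γ * Q.mulVec x s := by
    intro x s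
    simp only [mulVec, dotProduct, Fintype.sum_prod_type, hB, Q, Finset.mul_sum, Finset.sum_mul,
      sub_mul, Finset.sum_sub_distrib]
    congr 1
    · simp only [ite_mul, one_mul, zero_mul]
      rw [Finset.sum_eq_single s]
      · simp [← Finset.mul_sum, hps]
      · intro b _ hb
        simp [hb.symm]
      · simp
    · refine Finset.sum_congr rfl fun s' _ => Finset.sum_congr rfl fun a _ => by ring
  obtain ⟨x₁, hx₁⟩ := solve γ hγ Q hQ hQs e₁
  obtain ⟨x₂, hx₂⟩ := solve γ hγ Q hQ hQs e₂
  have hqe : q = fun y => X y.1 * p y.1 y.2 := by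
    ext ⟨s, a⟩; exact hqp s a
  have hXe : ∀ s, X s - γ * Q.mulVec X s = μ s + e₁ s - e₂ s := fun s => by
    rw [← hBx, ← hqe, hBq]
  have h1 := inv_pos γ hγ Q hQ hQs x₁ (fun s => by rw [hx₁]; exact he₁ s)
  have h2 := inv_pos γ hγ Q hQ hQs x₂ (fun s => by rw [hx₂]; exact he₂ s)
  have h3 := inv_pos γ hγ Q hQ hQs (X - x₁ + x₂) (fun s => by
    have := hXe s
    have := hx₁ s
    have := hx₂ s
    have := hμ s
    simp only [mulVec_add, mulVec_sub, Pi.add_apply, Pi.sub_apply]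
    linarith)
  have hb1 : B.mulVec (fun y => x₁ y.1 * p y.1 y.2) = e₁ := by
    ext s; rw [hBx, hx₁]
  have hb2 : B.mulVec (fun y => x₂ y.1 * p y.1 y.2) = e₂ := by
    ext s; rw [hBx, hx₂]
  refine ⟨fun y => x₁ y.1 * p y.1 y.2, fun y => x₂ y.1 * p y.1 y.2,
    fun y => mul_nonneg (h1 _) (hp _ _), fun y => mul_nonneg (h2 _) (hp _ _), ?_, ?_, hb1, hb2⟩
  · rintro ⟨s, a⟩
    have := mul_nonneg (h3 s) (hp s a)
    simp only [Pi.add_apply, Pi.sub_apply] at this ⊢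
    rw [hqp s a]
    linarith
  · rw [mulVec_add, mulVec_sub, hb1, hb2]
    ext s
    simp only [Pi.add_apply, Pi.sub_apply, hBq]
    ring

end CMDPaux

/-- Deterministic form of the estimation-gap bound (paper's Lemma 2): if all empirical
quantities are within `η` of their true values, then both the true CMDP LP value `V` and the
empirical LP value `V̄` (with slack `η`) are attained, and they sandwich each other:
`V ≤ V̄ + η` and `V̄ ≤ V + 2ηD + η²·D·|S|/(1−γ)` with
`D = 1 + (1/mα)(1 + |S|/(1−γ))`. -/
theorem empirical_LP_value_sandwich
    (S A K : Type*) [Fintype S] [DecidableEq S] [Fintype A] [Fintype K] [Nonempty K]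
    (γ : ℝ) (hγ : γ ∈ Set.Ioo (0:ℝ) 1)
    (P : S → S → A → ℝ)
    (hPnn : ∀ s s' a, 0 ≤ P s s' a)
    (hPsum : ∀ s' a, ∑ s, P s s' a = 1)
    (μ₁ : S → ℝ) (hμnn : ∀ s, 0 ≤ μ₁ s) (hμsum : ∑ s, μ₁ s = 1)
    (B : Matrix S (S × A) ℝ)
    (hB : ∀ s s' a, B s (s', a) = (if s = s' then (1:ℝ) else 0) - γ * P s s' a)
    (μ : S → ℝ) (hμ : ∀ s, μ s = (1 - γ) * μ₁ s)
    (rhat : S × A → ℝ) (hr : ∀ x, rhat x ∈ Set.Icc (0:ℝ) 1)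
    (C : Matrix K (S × A) ℝ) (hC : ∀ k x, C k x ∈ Set.Icc (0:ℝ) 1)
    (α : K → ℝ)
    (mα : ℝ) (hmα : mα = Finset.univ.inf' Finset.univ_nonempty α)
    (hmα_pos : 0 < mα) (hmα_le : mα ≤ 1)
    (qbar : S × A → ℝ) (hqbar_nn : ∀ x, 0 ≤ qbar x)
    (hqbar_flow : B.mulVec qbar = μ) (hqbar_cost : C.mulVec qbar = 0)
    (η : ℝ) (hη : 0 < η)
    (rbar : S × A → ℝ) (hrbar : ∀ x, |rbar x - rhat x| ≤ η)
    (Cbar : Matrix K (S × A) ℝ) (hCbar : ∀ k x, |Cbar k x - C k x| ≤ η)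
    (Pbar : S → S → A → ℝ)
    (hPbnn : ∀ s s' a, 0 ≤ Pbar s s' a)
    (hPbsum : ∀ s' a, ∑ s, Pbar s s' a = 1)
    (hPest : ∀ s s' a, |Pbar s s' a - P s s' a| ≤ η)
    (Bbar : Matrix S (S × A) ℝ)
    (hBbar : ∀ s s' a, Bbar s (s', a) = (if s = s' then (1:ℝ) else 0) - γ * Pbar s s' a)
    (D : ℝ) (hD : D = 1 + (1 / mα) * (1 + (Fintype.card S : ℝ) / (1 - γ))) :
    ∃ V Vbar : ℝ,
      IsGreatest {v | ∃ q : S × A → ℝ, (∀ x, 0 ≤ q x) ∧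
        (∀ k, C.mulVec q k ≤ α k) ∧ B.mulVec q = μ ∧ v = rhat ⬝ᵥ q} V ∧
      IsGreatest {v | ∃ q : S × A → ℝ, (∀ x, 0 ≤ q x) ∧
        (∀ k, Cbar.mulVec q k ≤ α k + η) ∧ (∀ s, |Bbar.mulVec q s - μ s| ≤ η) ∧
        v = rbar ⬝ᵥ q} Vbar ∧
      V ≤ Vbar + η ∧
      Vbar ≤ V + 2 * η * D + η ^ 2 * D * (Fintype.card S : ℝ) / (1 - γ) := by
  classical
  obtain ⟨hγ0, hγ1⟩ := id hγ
  have hg : 0 < 1 - γ := by linarith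
  have hμ0 : ∀ s, 0 ≤ μ s := fun s => by rw [hμ]; exact mul_nonneg hg.le (hμnn s)
  have hμs : ∑ s, μ s = 1 - γ := by
    simp only [hμ, ← Finset.mul_sum, hμsum, mul_one]
  have hαm : ∀ k, mα ≤ α k := fun k => by rw [hmα]; exact Finset.inf'_le _ (Finset.mem_univ k)
  have hfs := CMDPaux.flow_sum γ P hPsum B hB
  have hfsb := CMDPaux.flow_sum γ Pbar hPbsum Bbar hBbar
  have hBd : ∀ s x, |Bbar s x - B s x| ≤ η := by
    rintro s ⟨s', a⟩
    rw [hB, hBbar]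
    have h1 : (if s = s' then (1:ℝ) else 0) - γ * Pbar s s' a
      - ((if s = s' then (1:ℝ) else 0) - γ * P s s' a) = -(γ * (Pbar s s' a - P s s' a)) := by ring
    rw [h1, abs_neg, abs_mul, abs_of_pos hγ0]
    have := hPest s s' a
    nlinarith [abs_nonneg (Pbar s s' a - P s s' a)]
  have hsum1 : ∀ q : S × A → ℝ, B.mulVec q = μ → ∑ x, q x = 1 := by
    intro q h
    have h1 := hfs q
    rw [h, hμs] at h1
    have : (1 - γ) * (∑ x, q x - 1) = 0 := by linarith
    rcases mul_eq_zero.1 this with h | h <;> linarith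
  have hqb1 := hsum1 qbar hqbar_flow
  have hA : Nonempty A := by
    by_contra hA
    rw [not_nonempty_iff] at hA
    simp at hqb1
  set n : ℝ := (Fintype.card S : ℝ) with hn
  have hn0 : 0 ≤ n := Nat.cast_nonneg _
  have hsum2 : ∀ q : S × A → ℝ, (∀ s, |Bbar.mulVec q s - μ s| ≤ η) →
      ∑ x, q x ≤ 1 + n * η / (1 - γ) := by
    intro q h
    have h1 := hfsb q
    have h2 : ∑ s, Bbar.mulVec q s ≤ ∑ s, (μ s + η) :=
      Finset.sum_le_sum fun s _ => by have := (abs_le.1 (h s)).2; linarith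
    rw [Finset.sum_add_distrib, hμs, h1] at h2
    simp only [Finset.sum_const, Finset.card_univ, nsmul_eq_mul] at h2
    have h3 : 1 + n * η / (1 - γ) = ((1 - γ) + n * η) / (1 - γ) := by field_simp
    rw [h3, le_div_iff₀ hg]
    linarith
  have himp : ∀ q : S × A → ℝ, (∀ x, 0 ≤ q x) → (∀ k, C.mulVec q k ≤ α k) → B.mulVec q = μ →
      (∀ k, Cbar.mulVec q k ≤ α k + η) ∧ (∀ s, |Bbar.mulVec q s - μ s| ≤ η) := by
    intro q h0 h1 h2
    have h3 := hsum1 q h2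
    constructor
    · intro k
      have := CMDPaux.dot_diff (Cbar k) (C k) q η (hCbar k) h0
      rw [h3] at this
      have h4 := (abs_le.1 this).2
      have h5 := h1 k
      simp only [mulVec] at h5 ⊢
      linarith
    · intro s
      have := CMDPaux.dot_diff (Bbar s) (B s) q η (hBd s) h0
      rw [h3, mul_one] at this
      rw [← h2]
      exact this
  have hqbC : ∀ k, C.mulVec qbar k ≤ α k := fun k => by
    rw [hqbar_cost]
    exact hmα_pos.le.trans (hαm k)
  obtain ⟨q₁, ⟨h10, h1C, h1B⟩, h1max⟩ := CMDPaux.exists_max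
    {q : S × A → ℝ | (∀ x, 0 ≤ q x) ∧ (∀ k, C.mulVec q k ≤ α k) ∧ B.mulVec q = μ}
    (by
      simp only [Set.setOf_and, Set.setOf_forall]
      refine (isClosed_iInter fun x => ?_).inter ((isClosed_iInter fun k => ?_).inter ?_)
      · exact isClosed_le (by fun_prop) (by fun_prop)
      · exact isClosed_le (by unfold mulVec dotProduct; fun_prop) (by fun_prop)
      · exact isClosed_eq (by unfold mulVec dotProduct; fun_prop) (by fun_prop))
    1 (fun q h => h.1) (fun q h => (hsum1 q h.2.2).le) ⟨qbar, hqbar_nn, hqbC, hqbar_flow⟩ rhat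
  obtain ⟨q₂, ⟨h20, h2C, h2B⟩, h2max⟩ := CMDPaux.exists_max
    {q : S × A → ℝ | (∀ x, 0 ≤ q x) ∧ (∀ k, Cbar.mulVec q k ≤ α k + η) ∧
      (∀ s, |Bbar.mulVec q s - μ s| ≤ η)}
    (by
      simp only [Set.setOf_and, Set.setOf_forall]
      refine (isClosed_iInter fun x => ?_).inter
        ((isClosed_iInter fun k => ?_).inter (isClosed_iInter fun s => ?_))
      · exact isClosed_le (by fun_prop) (by fun_prop)
      · exact isClosed_le (by unfold mulVec dotProduct; fun_prop) (by fun_prop)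
      · exact isClosed_le (by unfold mulVec dotProduct; fun_prop) (by fun_prop))
    (1 + n * η / (1 - γ)) (fun q h => h.1) (fun q h => hsum2 q h.2.2)
    ⟨qbar, hqbar_nn, himp qbar hqbar_nn hqbC hqbar_flow⟩ rbar
  refine ⟨rhat ⬝ᵥ q₁, rbar ⬝ᵥ q₂, ⟨⟨q₁, h10, h1C, h1B, rfl⟩, ?_⟩, ⟨⟨q₂, h20, h2C, h2B, rfl⟩, ?_⟩,
    ?_, ?_⟩
  · rintro v ⟨q, a, b, c, rfl⟩
    exact h1max q ⟨a, b, c⟩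
  · rintro v ⟨q, a, b, c, rfl⟩
    exact h2max q ⟨a, b, c⟩
  · have h1 := h2max q₁ ⟨h10, himp q₁ h10 h1C h1B⟩
    have h2 := CMDPaux.dot_diff rbar rhat q₁ η hrbar h10
    rw [hsum1 q₁ h1B] at h2
    have := (abs_le.1 h2).1
    linarith
  set N : ℝ := ∑ x, q₂ x with hN
  have hN0 : 0 ≤ N := Finset.sum_nonneg fun x _ => h20 x
  have hNle : N ≤ 1 + n * η / (1 - γ) := hsum2 q₂ h2B
  have hr2 := (abs_le.1 (CMDPaux.dot_diff rbar rhat q₂ η hrbar h20)).2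
  rw [← hN] at hr2
  have hC2 : ∀ k, C k ⬝ᵥ q₂ ≤ α k + η + η * N := by
    intro k
    have h1 := (abs_le.1 (CMDPaux.dot_diff (Cbar k) (C k) q₂ η (hCbar k) h20)).1
    have h2 := h2C k
    simp only [mulVec] at h2
    linarith
  have hB2 : ∀ s, |B.mulVec q₂ s - μ s| ≤ η + η * N := by
    intro s
    have h1 := CMDPaux.dot_diff (Bbar s) (B s) q₂ η (hBd s) h20
    have h2 := h2B s
    simp only [mulVec] at h2 ⊢
    rw [abs_le] at *
    constructor <;> linarith [h1.1, h1.2, h2.1, h2.2]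
  obtain ⟨d₁, d₂, hd1, hd2, hq', hBq', hBd1, hBd2⟩ := CMDPaux.repair γ hγ P hPnn hPsum B hB μ hμ0
    q₂ h20 (fun s => max (B.mulVec q₂ s - μ s) 0) (fun s => max (-(B.mulVec q₂ s - μ s)) 0)
    (fun s => le_max_right _ _) (fun s => le_max_right _ _) (fun s => by
      rcases le_total 0 (B.mulVec q₂ s - μ s) with h | h
      · rw [max_eq_left h, max_eq_right (by linarith)]; ring
      · rw [max_eq_right h, max_eq_left (by linarith)]; ring)
  set T₁ : ℝ := ∑ x, d₁ x with hT1
  set T₂ : ℝ := ∑ x, d₂ x with hT2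
  have hT10 : 0 ≤ T₁ := Finset.sum_nonneg fun x _ => hd1 x
  have hT20 : 0 ≤ T₂ := Finset.sum_nonneg fun x _ => hd2 x
  have hT : T₁ + T₂ ≤ n / (1 - γ) * (η + η * N) := by
    have h1 := hfs d₁
    have h2 := hfs d₂
    rw [hBd1] at h1
    rw [hBd2] at h2
    have h3 : ∑ s, max (B.mulVec q₂ s - μ s) 0 + ∑ s, max (-(B.mulVec q₂ s - μ s)) 0
        ≤ ∑ s : S, (η + η * N) := by
      rw [← Finset.sum_add_distrib]
      refine Finset.sum_le_sum fun s _ => le_trans (le_of_eq ?_) (hB2 s)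
      rcases le_total 0 (B.mulVec q₂ s - μ s) with h | h
      · rw [max_eq_left h, max_eq_right (by linarith), abs_of_nonneg h]; ring
      · rw [max_eq_right h, max_eq_left (by linarith), abs_of_nonpos h]; ring
    rw [Finset.sum_const, Finset.card_univ, nsmul_eq_mul, ← hn] at h3
    rw [div_mul_eq_mul_div, le_div_iff₀ hg]
    linarith
  set q' : S × A → ℝ := q₂ - d₁ + d₂ with hq'def
  have hq'1 := hsum1 q' hBq'
  have hrq' : rhat ⬝ᵥ q₂ ≤ rhat ⬝ᵥ q' + T₁ := by
    rw [hq'def, dotProduct_add, dotProduct_sub]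
    have := CMDPaux.dot_le rhat d₁ hr hd1
    have := CMDPaux.dot_nonneg rhat d₂ hr hd2
    linarith
  set ε : ℝ := η + η * N + T₂ with hε
  have hηN : 0 ≤ η * N := mul_nonneg hη.le hN0
  have hε0 : 0 ≤ ε := by linarith
  have hCq' : ∀ k, C k ⬝ᵥ q' ≤ α k + ε := by
    intro k
    rw [hq'def, dotProduct_add, dotProduct_sub]
    have := CMDPaux.dot_le (C k) d₂ (hC k) hd2
    have := CMDPaux.dot_nonneg (C k) d₁ (hC k) hd1
    have := hC2 k
    linarith
  have hme : 0 < mα + ε := by linarith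
  set t : ℝ := ε / (mα + ε) with ht
  have ht0 : 0 ≤ t := div_nonneg hε0 hme.le
  have ht1 : t ≤ 1 := by rw [ht, div_le_one hme]; linarith
  have hte : t * (mα + ε) = ε := div_mul_cancel₀ _ hme.ne'
  have htm : t ≤ ε / mα := div_le_div_of_nonneg_left hε0 hmα_pos (by linarith)
  have hfin := h1max ((1 - t) • q' + t • qbar) ⟨?_, ?_, ?_⟩
  rotate_left
  · intro x
    have := mul_nonneg (sub_nonneg.2 ht1) (hq' x)
    have := mul_nonneg ht0 (hqbar_nn x)
    simp only [Pi.add_apply, Pi.smul_apply, smul_eq_mul] at *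
    linarith
  · intro k
    rw [mulVec_add, mulVec_smul, mulVec_smul, hqbar_cost]
    simp only [Pi.add_apply, Pi.smul_apply, smul_eq_mul, Pi.zero_apply, mul_zero, add_zero]
    have h1 := mul_le_mul_of_nonneg_left (hCq' k) (sub_nonneg.2 ht1)
    have h2 := mul_le_mul_of_nonneg_left (hαm k) ht0
    simp only [mulVec]
    linarith
  · rw [mulVec_add, mulVec_smul, mulVec_smul, hqbar_flow, hBq', ← add_smul]
    simp
  rw [dotProduct_add, dotProduct_smul, dotProduct_smul, smul_eq_mul, smul_eq_mul] at hfin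
  have hb0 := mul_nonneg ht0 (CMDPaux.dot_nonneg rhat qbar hr hqbar_nn)
  have hq'le := CMDPaux.dot_le rhat q' hr hq'
  rw [hq'1] at hq'le
  have htq := mul_le_mul_of_nonneg_left hq'le ht0
  have hT1m : T₁ ≤ T₁ / mα := by
    rw [le_div_iff₀ hmα_pos]; nlinarith
  have hmain : rbar ⬝ᵥ q₂ ≤ rhat ⬝ᵥ q₁ + η * N + (ε + T₁) / mα := by
    rw [add_div]; linarith
  have h5 : (ε + T₁) / mα ≤ (η + η * N + n / (1 - γ) * (η + η * N)) / mα :=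
    div_le_div_of_nonneg_right (by linarith) hmα_pos.le
  have hD0 : 0 ≤ D := by rw [hD]; positivity
  have h6 : η + η * N + (η + η * N + n / (1 - γ) * (η + η * N)) / mα = η * D * (1 + N) := by
    rw [hD]; ring
  have h7 : η * D * (1 + N) ≤ η * D * (1 + (1 + n * η / (1 - γ))) :=
    mul_le_mul_of_nonneg_left (by linarith) (mul_nonneg hη.le hD0)
  have h8 : η * D * (1 + (1 + n * η / (1 - γ))) = 2 * η * D + η ^ 2 * D * n / (1 - γ) := by ring
  linarith
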